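/- Let α̂, M̂, N̂ > 0. For every real z with 0 ≤ z < 1, (1/2π) ∫_{γ1}^{γ2} (M̂ − N̂ + (N̂+M̂+α̂)(1−u)) / ( (N̂+M̂+α̂)(1−u)(1−zu) √((γ2−u)(u−γ1)) ) du = 1/(2(1−z)) − C(M̂,N̂)/(1−z) + (M̂ + N̂ + α̂ − 2M̂z − zα̂) / ( 2(1−z) √( ((1−z)α̂ + M̂ + N̂)² − 4zM̂N̂ ) ); moreover, for 0 ≤ z < 1 the quantity ((1−z)α̂ + M̂ + N̂)² − 4zM̂N̂ under the last square root is strictly positive. -/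

import Mathlib

/-!
With `S = N̂ + M̂ + α̂`, the partial fraction identity
`1 / ((1 - u) (1 - z u)) = (1 / (1 - u) - z / (1 - z u)) / (1 - z)` reduces the integral to
the two integrals `∫ du / ((1 - w u) √((γ₂ - u) (u - γ₁)))` for `w = 1` and `w = z`.
Each equals `π / √((1 - w γ₁) (1 - w γ₂))` (`integral_kernel`): the Möbius map `g` taking `γ₁, γ₂`
to `-1, 1` with pole at `1 / w` turns the integrand into a multiple of `(arcsin ∘ g)'`.
Finally `S² (1 - w γ₁) (1 - w γ₂) = ((1 - w) α̂ + M̂ + N̂)² - 4 w M̂ N̂` (`gamma_prod`), which is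
`(M̂ - N̂)²` at `w = 1`, so the first integral contributes the sign of `M̂ - N̂`, i.e. `Chat`.
When `M̂ = N̂` the first integral diverges, but its coefficient `M̂ - N̂` vanishes.
-/

open Finset

noncomputable section

/-- `γ₁`. -/
def gamma1 (αh Mh Nh : ℝ) : ℝ :=
  (Real.sqrt ((αh + Mh) * (αh + Nh)) - Real.sqrt (Mh * Nh)) ^ 2 / (Nh + Mh + αh) ^ 2

/-- `γ₂`. -/
def gamma2 (αh Mh Nh : ℝ) : ℝ :=
  (Real.sqrt ((αh + Mh) * (αh + Nh)) + Real.sqrt (Mh * Nh)) ^ 2 / (Nh + Mh + αh) ^ 2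

/-- `C(M̂, N̂)`. -/
noncomputable def Chat (Mh Nh : ℝ) : ℝ :=
  if Mh > Nh then 0 else if Mh = Nh then 1 / 2 else 1

open MeasureTheory Set in
/-- The antiderivative is `arcsin (g u) / √((1 - w a) (1 - w b))`, where `g` is the Möbius map with
`a ↦ -1`, `b ↦ 1` and pole at `1 / w`. Its derivative is nonnegative, which gives integrability in
spite of the singularities at the end points. -/
lemma integral_kernel {a b w : ℝ} (hab : a < b) (ha : 0 < 1 - w * a) (hb : 0 < 1 - w * b) :
    IntervalIntegrable (fun u => 1 / ((1 - w * u) * √((b - u) * (u - a)))) volume a b ∧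
    ∫ u in a..b, 1 / ((1 - w * u) * √((b - u) * (u - a)))
      = Real.pi / √((1 - w * a) * (1 - w * b)) := by
  set p := 1 - w * a with hp
  set q := 1 - w * b with hq
  have hba : 0 < b - a := sub_pos.2 hab
  have hpq : 0 < √(p * q) := Real.sqrt_pos.2 (mul_pos ha hb)
  have hden : ∀ u, (b - a) * (1 - w * u) = (b - u) * p + (u - a) * q := by
    intro u; rw [hp, hq]; ring
  have hpos : ∀ u ∈ Icc a b, 0 < 1 - w * u := by
    intro u hu
    have h1 : 0 < (b - a) * (1 - w * u) := by
      rw [hden]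
      rcases eq_or_lt_of_le hu.1 with h | h
      · subst h; have := mul_pos hba ha; linarith
      · have := mul_pos (sub_pos.2 h) hb
        have := mul_nonneg (sub_nonneg.2 hu.2) ha.le
        linarith
    exact (mul_pos_iff_of_pos_left hba).1 h1
  set g : ℝ → ℝ := fun u => ((u - a) * q - (b - u) * p) / ((b - a) * (1 - w * u)) with hg
  set F : ℝ → ℝ := fun u => Real.arcsin (g u) / √(p * q) with hF
  have hcont : ContinuousOn F (Icc a b) := by
    apply ContinuousOn.div_const
    apply Real.continuous_arcsin.comp_continuousOn
    apply ContinuousOn.div (by fun_prop) (by fun_prop)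
    intro u hu
    exact (mul_pos hba (hpos u hu)).ne'
  have hderiv : ∀ u ∈ Ioo a b,
      HasDerivAt F (1 / ((1 - w * u) * √((b - u) * (u - a)))) u := by
    intro u hu
    have hw := hpos u (Ioo_subset_Icc_self hu)
    have hua : 0 < u - a := sub_pos.2 hu.1
    have hbu : 0 < b - u := sub_pos.2 hu.2
    have hX := mul_pos hba hw
    have h1g : 1 - g u ^ 2 =
        (2 * (√(p * q) * √((b - u) * (u - a))) / ((b - a) * (1 - w * u))) ^ 2 := by
      simp only [hg]
      rw [div_pow (2 * _), mul_pow 2, mul_pow (√(p * q)), Real.sq_sqrt (mul_pos ha hb).le,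
        Real.sq_sqrt (mul_pos hbu hua).le, div_pow, eq_div_iff (by positivity), sub_mul, div_mul_cancel₀ _ (by positivity), hden]
      ring
    have hs : 0 < √((b - u) * (u - a)) := Real.sqrt_pos.2 (mul_pos hbu hua)
    have h1pos : 0 < 1 - g u ^ 2 := by rw [h1g]; positivity
    have hgd : HasDerivAt g (2 * (p * q) / ((b - a) * (1 - w * u) ^ 2)) u := by
      have h1 : HasDerivAt (fun u => (u - a) * q - (b - u) * p) (q + p) u := by
        refine ((((hasDerivAt_id' u).sub_const a).mul_const q).sub
          (((hasDerivAt_id' u).const_sub b).mul_const p)).congr_deriv ?_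
        ring
      have h2 : HasDerivAt (fun u => (b - a) * (1 - w * u)) ((b - a) * (-w)) u := by
        refine ((((hasDerivAt_id' u).const_mul w).const_sub 1).const_mul (b - a)).congr_deriv ?_
        ring
      refine (h1.div h2 hX.ne').congr_deriv ?_
      rw [div_eq_div_iff (by positivity) (by positivity), hp, hq]
      ring
    have hne1 : g u ≠ -1 := by intro h; rw [h] at h1pos; norm_num at h1pos
    have hne2 : g u ≠ 1 := by intro h; rw [h] at h1pos; norm_num at h1pos
    refine (((Real.hasDerivAt_arcsin hne1 hne2).comp u hgd).div_const (√(p * q))).congr_deriv ?_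
    rw [h1g, Real.sqrt_sq (by positivity)]
    have := Real.mul_self_sqrt (mul_pos ha hb).le
    generalize 1 - w * u = X at hw ⊢
    field_simp
    linear_combination -this
  have hnn : ∀ u ∈ Ioo a b, 0 ≤ 1 / ((1 - w * u) * √((b - u) * (u - a))) := by
    intro u hu
    have := hpos u (Ioo_subset_Icc_self hu)
    positivity
  have hint : IntervalIntegrable (fun u => 1 / ((1 - w * u) * √((b - u) * (u - a)))) volume a b := by
    rw [intervalIntegrable_iff_integrableOn_Ioc_of_le hab.le]
    exact intervalIntegral.integrableOn_deriv_of_nonneg hcont hderiv hnn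
  refine ⟨hint, ?_⟩
  rw [intervalIntegral.integral_eq_sub_of_hasDerivAt_of_le hab.le hcont hderiv hint]
  have hgb : g b = 1 := by
    simp only [hg]
    rw [div_eq_one_iff_eq (mul_pos hba hb).ne', hden]; ring
  have hga : g a = -1 := by
    simp only [hg]
    rw [div_eq_iff (mul_pos hba ha).ne', hden]; ring
  simp only [hF, hgb, hga, Real.arcsin_one, Real.arcsin_neg_one]
  ring

section
variable {αh Mh Nh : ℝ}

lemma gamma_prod (hαh : 0 < αh) (hMh : 0 < Mh) (hNh : 0 < Nh) (w : ℝ) :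
    (1 - w * gamma1 αh Mh Nh) * (1 - w * gamma2 αh Mh Nh) =
      (((1 - w) * αh + Mh + Nh) ^ 2 - 4 * w * Mh * Nh) / (Nh + Mh + αh) ^ 2 := by
  have hA : √((αh + Mh) * (αh + Nh)) ^ 2 = (αh + Mh) * (αh + Nh) := Real.sq_sqrt (by positivity)
  have hB : √(Mh * Nh) ^ 2 = Mh * Nh := Real.sq_sqrt (by positivity)
  unfold gamma1 gamma2
  generalize √((αh + Mh) * (αh + Nh)) = A at *
  generalize √(Mh * Nh) = B at *
  have hS : Nh + Mh + αh ≠ 0 := by positivity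
  have h1 : ((A - B) ^ 2) * ((A + B) ^ 2) = (αh * (Nh + Mh + αh)) ^ 2 := by
    have : (A - B) * (A + B) = αh * (Nh + Mh + αh) := by linear_combination hA - hB
    rw [← this]; ring
  have h2 : (A - B) ^ 2 + (A + B) ^ 2 = 2 * ((αh + Mh) * (αh + Nh) + Mh * Nh) := by
    linear_combination 2 * hA + 2 * hB
  field_simp
  linear_combination w ^ 2 * h1 - w * (Nh + Mh + αh) ^ 2 * h2

lemma gamma1_lt_gamma2 (hαh : 0 < αh) (hMh : 0 < Mh) (hNh : 0 < Nh) :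
    gamma1 αh Mh Nh < gamma2 αh Mh Nh := by
  have hA : 0 < √((αh + Mh) * (αh + Nh)) := Real.sqrt_pos.2 (by positivity)
  have hB : 0 < √(Mh * Nh) := Real.sqrt_pos.2 (by positivity)
  unfold gamma1 gamma2
  gcongr ?_ / _
  nlinarith [mul_pos hA hB]

/-- By AM-GM, `√((α̂ + M̂) (α̂ + N̂)) ≤ α̂ + (M̂ + N̂) / 2` and `√(M̂ N̂) ≤ (M̂ + N̂) / 2`. -/
lemma gamma2_le_one (hαh : 0 < αh) (hMh : 0 < Mh) (hNh : 0 < Nh) : gamma2 αh Mh Nh ≤ 1 := by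
  unfold gamma2
  have h1 : √((αh + Mh) * (αh + Nh)) ≤ αh + (Mh + Nh) / 2 :=
    Real.sqrt_le_iff.2 ⟨by positivity, by nlinarith [sq_nonneg (Mh - Nh)]⟩
  have h2 : √(Mh * Nh) ≤ (Mh + Nh) / 2 :=
    Real.sqrt_le_iff.2 ⟨by positivity, by nlinarith [sq_nonneg (Mh - Nh)]⟩
  rw [div_le_one (by positivity)]
  exact pow_le_pow_left₀ (by positivity) (by linarith) 2

end

/-- the evaluation of the generating-function integral, together
with the strict positivity of the discriminant-type quantity under the square
root. -/
theorem statement18 (αh Mh Nh : ℝ) (hαh : 0 < αh) (hMh : 0 < Mh) (hNh : 0 < Nh)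
    (z : ℝ) (hz0 : 0 ≤ z) (hz1 : z < 1) :
    (1 / (2 * Real.pi)) *
        (∫ u in gamma1 αh Mh Nh..gamma2 αh Mh Nh,
          (Mh - Nh + (Nh + Mh + αh) * (1 - u)) /
            ((Nh + Mh + αh) * (1 - u) * (1 - z * u) *
              Real.sqrt ((gamma2 αh Mh Nh - u) * (u - gamma1 αh Mh Nh))))
      = 1 / (2 * (1 - z)) - Chat Mh Nh / (1 - z) +
          (Mh + Nh + αh - 2 * Mh * z - z * αh) /
            (2 * (1 - z) *
              Real.sqrt (((1 - z) * αh + Mh + Nh) ^ 2 - 4 * z * Mh * Nh)) ∧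
    0 < ((1 - z) * αh + Mh + Nh) ^ 2 - 4 * z * Mh * Nh := by
  have hS : 0 < Nh + Mh + αh := by positivity
  have hlt := gamma1_lt_gamma2 hαh hMh hNh
  have hle := gamma2_le_one hαh hMh hNh
  have hprod := gamma_prod hαh hMh hNh
  set c := gamma1 αh Mh Nh
  set d := gamma2 αh Mh Nh
  set D := ((1 - z) * αh + Mh + Nh) ^ 2 - 4 * z * Mh * Nh with hDdef
  have hz : 0 < 1 - z := sub_pos.2 hz1
  have hzd : 0 < 1 - z * d := by nlinarith
  have hzc : 0 < 1 - z * c := by nlinarith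
  have hD : 0 < D := by
    have h := mul_pos hzc hzd
    rw [hprod z] at h
    exact (div_pos_iff_of_pos_right (by positivity)).1 h
  refine ⟨?_, hD⟩
  have hsD : 0 < √D := Real.sqrt_pos.2 hD
  obtain ⟨hi, hI⟩ := integral_kernel hlt hzc hzd
  rw [hprod z, Real.sqrt_div hD.le, Real.sqrt_sq hS.le] at hI
  have hpi := Real.pi_pos
  by_cases hMN : Mh = Nh
  · have hcongr : (∫ u in c..d, (Mh - Nh + (Nh + Mh + αh) * (1 - u)) /
        ((Nh + Mh + αh) * (1 - u) * (1 - z * u) * √((d - u) * (u - c)))) =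
        ∫ u in c..d, 1 / ((1 - z * u) * √((d - u) * (u - c))) := by
      apply intervalIntegral.integral_congr
      intro u hu
      simp only
      rw [hMN, sub_self, zero_add]
      rw [Set.uIcc_of_le hlt.le] at hu
      rcases eq_or_lt_of_le hu.2 with h | h
      -- at `u = d` both integrands are `0`, by the convention `x / 0 = 0`
      · simp [h]
      · have hu1 : 1 - u ≠ 0 := by linarith
        have hS' : Nh + Nh + αh ≠ 0 := by positivity
        rw [mul_assoc, ← mul_div_mul_left 1 _ (mul_ne_zero hS' hu1), mul_one]
    rw [hcongr, hI]
    simp only [Chat, hMN, gt_iff_lt, lt_self_iff_false, if_false, if_true]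
    field_simp
    ring
  · have hp1 := hprod 1
    have h1 : (((1 - 1) * αh + Mh + Nh) ^ 2 - 4 * 1 * Mh * Nh) = (Mh - Nh) ^ 2 := by ring
    have hne : Mh - Nh ≠ 0 := sub_ne_zero.2 hMN
    rw [h1] at hp1
    have hd1 : d < 1 := by
      refine lt_of_le_of_ne hle fun h => ?_
      rw [h] at hp1
      have : 0 < (Mh - Nh) ^ 2 / (Nh + Mh + αh) ^ 2 := by positivity
      rw [← hp1] at this
      norm_num at this
    obtain ⟨hj, hJ⟩ := integral_kernel (w := 1) hlt (by linarith) (by linarith)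
    rw [hp1, Real.sqrt_div (sq_nonneg _), Real.sqrt_sq hS.le, Real.sqrt_sq_eq_abs] at hJ
    have hcongr : (∫ u in c..d, (Mh - Nh + (Nh + Mh + αh) * (1 - u)) /
        ((Nh + Mh + αh) * (1 - u) * (1 - z * u) * √((d - u) * (u - c)))) =
        ∫ u in c..d, ((Mh - Nh) / ((Nh + Mh + αh) * (1 - z)) *
            (1 / ((1 - 1 * u) * √((d - u) * (u - c)))) +
          (1 - (Mh - Nh) * z / ((Nh + Mh + αh) * (1 - z))) *
            (1 / ((1 - z * u) * √((d - u) * (u - c))))) := by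
      apply intervalIntegral.integral_congr
      intro u hu
      simp only
      rw [Set.uIcc_of_le hlt.le] at hu
      have hu1 : 1 - u ≠ 0 := by linarith [hu.2]
      have hu2 : 1 - z * u ≠ 0 := by nlinarith [hu.2]
      rw [one_mul]
      -- the square root is a common factor `r⁻¹`, so its zeros at the end points do not matter
      simp only [div_eq_mul_inv, mul_inv]
      generalize (√((d - u) * (u - c)))⁻¹ = r
      generalize hX : 1 - z * u = X at hu2 ⊢
      field_simp
      linear_combination r * (Mh - Nh) * hX
    rw [hcongr, intervalIntegral.integral_add (hj.const_mul _) (hi.const_mul _),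
      intervalIntegral.integral_const_mul, intervalIntegral.integral_const_mul, hI, hJ]
    rcases lt_or_gt_of_ne hMN with h | h
    · rw [abs_of_neg (sub_neg.2 h)]
      have hne' : Nh - Mh ≠ 0 := by linarith
      simp only [Chat, gt_iff_lt, not_lt.2 h.le, hMN, if_false]
      rw [neg_sub]
      field_simp
      ring
    · rw [abs_of_pos (sub_pos.2 h)]
      simp only [Chat, gt_iff_lt, h, if_true]
      field_simp
      ring
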